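/- arXiv:math/0207098 — 6 statements merged into one kernel-verified Lean document; each statement's English description precedes it below -/
import Mathlib

section
/- Let R be a commutative ring, n a positive integer, I ⊆ {1,…,n}, i ∈ I, and d ≥ 1 an integer. Let σ = σ_{I,i} be the blow-up chart substitution. Suppose f ∈ R[X_1,…,X_n] lies in the d-th power of the ideal generated by {X_j : j ∈ I}. Then X_i^d divides σ(f), and for any g ∈ R[X_1,…,X_n] with σ(f) = X_i^d·g the following identities hold: (1) for every j ∉ I: σ(∂f/∂X_j) = X_i^d·∂g/∂X_j; (2) for every j ∈ I with j ≠ i: σ(∂f/∂X_j) = X_i^{d−1}·∂g/∂X_j; (3) σ(∂f/∂X_i) = X_i^{d−1}·( d·g + X_i·∂g/∂X_i − Σ_{j∈I, j≠i} X_j·∂g/∂X_j ). -/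
open MvPolynomial

theorem chain_aux {R : Type*} [CommRing R] {n : ℕ}
    (σ : MvPolynomial (Fin n) R →ₐ[R] MvPolynomial (Fin n) R) (k : Fin n)
    (p : MvPolynomial (Fin n) R) :
    pderiv k (σ p) = ∑ j, σ (pderiv j p) * pderiv k (σ (X j)) := by
  induction p using MvPolynomial.induction_on with
  | C a =>
    have : σ (C a) = C a := σ.commutes a
    simp [this]
  | add p q hp hq => simp [hp, hq, add_mul, Finset.sum_add_distrib]
  | mul_X p l hp =>
    have h : ∀ j, σ (pderiv j (p * X l)) * pderiv k (σ (X j)) =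
        σ (X l) * (σ (pderiv j p) * pderiv k (σ (X j))) +
        (if j = l then σ p * pderiv k (σ (X j)) else 0) := by
      intro j
      rw [pderiv_mul, map_add, map_mul, map_mul]
      split_ifs with hj
      · subst hj; rw [pderiv_X_self, map_one]; ring
      · rw [pderiv_X_of_ne (Ne.symm hj), map_zero]; ring
    rw [Finset.sum_congr rfl (fun j _ => h j), Finset.sum_add_distrib, ← Finset.mul_sum, ← hp,
      Finset.sum_ite_eq' Finset.univ l, map_mul, pderiv_mul]
    simp only [Finset.mem_univ, if_true]
    ring

/-- **Lemma 5.1 (Bierstone–Milman, "Desingularization algorithms I").**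
Transformation of partial derivatives under the blow-up chart substitution
`σ = σ_{I,i}` (given by `X i ↦ X i`, `X j ↦ X i * X j` for `j ∈ I \ {i}`,
`X j ↦ X j` for `j ∉ I`), for `f` of order `≥ d` along the centre
`{X j = 0 : j ∈ I}`. -/
theorem stmt_0 {R : Type*} [CommRing R] {n : ℕ} (hn : 0 < n)
    (I : Finset (Fin n)) (i : Fin n) (hi : i ∈ I) (d : ℕ) (hd : 1 ≤ d)
    (σ : MvPolynomial (Fin n) R →ₐ[R] MvPolynomial (Fin n) R)
    (hσ : ∀ j : Fin n, σ (X j) =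
      if j = i then X i else if j ∈ I then X i * X j else X j)
    (f : MvPolynomial (Fin n) R)
    (hf : f ∈ (Ideal.span (X '' (I : Set (Fin n)) :
      Set (MvPolynomial (Fin n) R))) ^ d) :
    X i ^ d ∣ σ f ∧
    ∀ g : MvPolynomial (Fin n) R, σ f = X i ^ d * g →
      (∀ j : Fin n, j ∉ I → σ (pderiv j f) = X i ^ d * pderiv j g) ∧
      (∀ j : Fin n, j ∈ I → j ≠ i →
        σ (pderiv j f) = X i ^ (d - 1) * pderiv j g) ∧
      σ (pderiv i f) = X i ^ (d - 1) *
        ((d : MvPolynomial (Fin n) R) * g + X i * pderiv i g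
          - ∑ j ∈ I.erase i, X j * pderiv j g) := by
  have hdvd : X i ^ d ∣ σ f := by
    have h1 : (Ideal.span (X '' (I : Set (Fin n)) : Set (MvPolynomial (Fin n) R))) ≤
        (Ideal.span {(X i : MvPolynomial (Fin n) R)}).comap σ := by
      rw [Ideal.span_le]
      rintro _ ⟨j, hj, rfl⟩
      have hj' : j ∈ I := hj
      simp only [SetLike.mem_coe, Ideal.mem_comap, Ideal.mem_span_singleton, hσ]
      split_ifs
      · exact dvd_rfl
      · exact dvd_mul_right _ _
    have h2 := (Ideal.le_comap_pow (σ : MvPolynomial (Fin n) R →ₐ[R] MvPolynomial (Fin n) R) d)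
      (Ideal.pow_right_mono h1 d hf)
    rwa [Ideal.mem_comap, Ideal.span_singleton_pow, Ideal.mem_span_singleton] at h2
  refine ⟨hdvd, fun g hg => ?_⟩
  obtain ⟨e, rfl⟩ : ∃ e, d = e + 1 := ⟨d - 1, by omega⟩
  simp only [Nat.add_sub_cancel]
  have hA : ∀ j : Fin n, j ≠ i → pderiv j (σ f) = X i ^ (e + 1) * pderiv j g := by
    intro j hj
    rw [hg, pderiv_mul, pderiv_pow, pderiv_X_of_ne (Ne.symm hj)]; ring
  have hB : ∀ j : Fin n, j ∈ I → j ≠ i → σ (pderiv j f) = X i ^ e * pderiv j g := by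
    intro j hj hji
    have h := chain_aux σ j f
    rw [hA j hji, Finset.sum_eq_single j] at h
    · rw [hσ, if_neg hji, if_pos hj, pderiv_mul, pderiv_X_self,
        pderiv_X_of_ne (Ne.symm hji)] at h
      rw [← X_mul_cancel_left_iff (i := i)]
      linear_combination -h
    · intro l _ hl
      rw [hσ]
      split_ifs
      · rw [pderiv_X_of_ne (Ne.symm hji), mul_zero]
      · rw [pderiv_mul, pderiv_X_of_ne (Ne.symm hji), pderiv_X_of_ne hl]; ring
      · rw [pderiv_X_of_ne hl, mul_zero]
    · simp
  refine ⟨fun j hj => ?_, hB, ?_⟩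
  · have hji : j ≠ i := fun h => hj (h ▸ hi)
    have h := chain_aux σ j f
    rw [hA j hji, Finset.sum_eq_single j] at h
    · rw [hσ, if_neg hji, if_neg hj, pderiv_X_self, mul_one] at h
      exact h.symm
    · intro l _ hl
      rw [hσ]
      split_ifs
      · rw [pderiv_X_of_ne (Ne.symm hji), mul_zero]
      · rw [pderiv_mul, pderiv_X_of_ne (Ne.symm hji), pderiv_X_of_ne hl]; ring
      · rw [pderiv_X_of_ne hl, mul_zero]
    · simp
  · have h := chain_aux σ i f
    rw [← Finset.sum_subset (Finset.subset_univ I), ← Finset.add_sum_erase I _ hi] at h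
    · have hs : ∑ l ∈ I.erase i, σ (pderiv l f) * pderiv i (σ (X l)) =
          X i ^ e * ∑ l ∈ I.erase i, X l * pderiv l g := by
        rw [Finset.mul_sum]
        refine Finset.sum_congr rfl fun l hl => ?_
        obtain ⟨hli, hlI⟩ := Finset.mem_erase.mp hl
        rw [hB l hlI hli, hσ, if_neg hli, if_pos hlI, pderiv_mul, pderiv_X_self,
          pderiv_X_of_ne hli]
        ring
      rw [hs, hg, hσ, if_pos rfl, pderiv_mul, pderiv_pow, pderiv_X_self,
        Nat.add_sub_cancel] at h
      linear_combination -h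
    · intro l _ hl
      have hli : l ≠ i := fun h => hl (h ▸ hi)
      rw [hσ, if_neg hli, if_neg hl, pderiv_X_of_ne hli, mul_zero]
end

section
/- Let K be a field, n ≥ 1, E ⊆ {1,…,n}, f ∈ K[X_1,…,X_n], and m ≥ 1 an integer. Then for every point c ∈ K^n the following are equivalent: (i) ord_c f ≥ m; (ii) ord_c f ≥ m, and ord_c (X_e·∂f/∂X_e) ≥ m−1 for every e ∈ E, and ord_c (∂f/∂X_u) ≥ m−1 for every u ∉ E. Equivalently, the equimultiple locus {c ∈ K^n : ord_c f ≥ m} coincides with the equimultiple locus of the collection D(f,m) = {(f,m)} ∪ {(X_e·∂f/∂X_e, m−1) : e ∈ E} ∪ {(∂f/∂X_u, m−1) : u ∉ E}. -/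
open MvPolynomial

/-- `ord_c f ≥ m`: `f` lies in the `m`-th power of the maximal ideal
`(X₁ - c₁, …, X_n - c_n)` at the point `c`. -/
def ordGe {K : Type*} [CommRing K] {n : ℕ} (c : Fin n → K)
    (f : MvPolynomial (Fin n) K) (m : ℕ) : Prop :=
  f ∈ (Ideal.span (Set.range fun j : Fin n => X j - C (c j))) ^ m

theorem deriv_mem_pow_aux {K : Type*} [Field K] {n : ℕ} (I : Ideal (MvPolynomial (Fin n) K))
    (i : Fin n) (k : ℕ) : ∀ f ∈ I ^ (k + 1), pderiv i f ∈ I ^ k := by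
  induction k with
  | zero => intro f _; simp
  | succ k ih =>
    intro f hf
    rw [pow_succ] at hf
    refine Submodule.mul_induction_on hf ?_ ?_
    · intro a ha b hb
      rw [Derivation.leibniz, smul_eq_mul, smul_eq_mul]
      refine add_mem (Ideal.mul_mem_right _ _ ha) ?_
      rw [pow_succ, mul_comm b]
      exact Ideal.mul_mem_mul (ih a ha) hb
    · intro a b ha hb
      rw [map_add]
      exact add_mem ha hb

/-- **Corollary 5.6 (Bierstone–Milman, "Desingularization algorithms I").**
`S_{(f,μ_f)} = S_{D(f,μ_f)}`: for every point `c`, `ord_c f ≥ m` iff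
`ord_c f ≥ m`, `ord_c (X_e · ∂f/∂X_e) ≥ m - 1` for every exceptional index
`e ∈ E`, and `ord_c (∂f/∂X_u) ≥ m - 1` for every complementary index
`u ∉ E`. -/
theorem stmt_3 {K : Type*} [Field K] {n : ℕ} (hn : 1 ≤ n)
    (E : Finset (Fin n)) (f : MvPolynomial (Fin n) K) (m : ℕ) (hm : 1 ≤ m) :
    ∀ c : Fin n → K,
      ordGe c f m ↔
        (ordGe c f m ∧
         (∀ e ∈ E, ordGe c (X e * pderiv e f) (m - 1)) ∧
         (∀ u : Fin n, u ∉ E → ordGe c (pderiv u f) (m - 1))) := by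
  intro c
  refine ⟨fun h => ?_, fun h => h.1⟩
  obtain ⟨k, rfl⟩ : ∃ k, m = k + 1 := ⟨m - 1, by omega⟩
  have key : ∀ j, ordGe c (pderiv j f) (k + 1 - 1) := fun j => deriv_mem_pow_aux _ j k f h
  exact ⟨h, fun e _ => Ideal.mul_mem_left _ _ (key e), fun u _ => key u⟩
end

section
/- Let R be a commutative ring, n ≥ 1, E ⊆ {1,…,n}, I ⊆ {1,…,n}, i ∈ I, d ≥ 1 an integer, and let σ = σ_{I,i} be the blow-up chart substitution. Suppose f ∈ R[X_1,…,X_n] lies in the d-th power of the ideal generated by {X_j : j ∈ I}, and let g ∈ R[X_1,…,X_n] be a polynomial with σ(f) = X_i^d·g. Then for every h in the set ∆_E(f), the polynomial X_i^{d−1} divides σ(h), and any q with σ(h) = X_i^{d−1}·q belongs to the ideal of R[X_1,…,X_n] generated by ∆_{E∪{i}}(g). -/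
open MvPolynomial

/-- `∆_{E'}(F) = {F} ∪ {X_e · ∂F/∂X_e : e ∈ E'} ∪ {∂F/∂X_u : u ∉ E'}`. -/
def deltaSet {R : Type*} [CommRing R] {n : ℕ} (E : Finset (Fin n))
    (F : MvPolynomial (Fin n) R) : Set (MvPolynomial (Fin n) R) :=
  {F} ∪ {h | ∃ e ∈ E, h = X e * pderiv e F} ∪
    {h | ∃ u : Fin n, u ∉ E ∧ h = pderiv u F}

theorem aux_ne {R : Type*} [CommRing R] {n : ℕ} (I : Finset (Fin n)) (i : Fin n)
    (σ : MvPolynomial (Fin n) R →ₐ[R] MvPolynomial (Fin n) R)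
    (hσ : ∀ j : Fin n, σ (X j) =
      if j = i then X i else if j ∈ I then X i * X j else X j)
    (u : Fin n) (hu : u ≠ i) (p : MvPolynomial (Fin n) R) :
    pderiv u (σ p) = (if u ∈ I then X i else 1) * σ (pderiv u p) := by
  induction p using MvPolynomial.induction_on with
  | C a =>
    have : σ (C a) = C a := σ.commutes a
    simp [this]
  | add p q hp hq => simp only [map_add, hp, hq]; ring
  | mul_X p j hp =>
    have key : pderiv u (σ (X j)) = (if u ∈ I then X i else 1) * σ (pderiv u (X j)) := by
      rw [hσ]
      by_cases hj : j = i
      · subst hj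
        simp [pderiv_X_of_ne (Ne.symm hu)]
      · by_cases hju : j = u
        · subst hju
          by_cases hI : j ∈ I
          · simp [hj, hI, pderiv_X_of_ne (Ne.symm hu)]
          · simp [hj, hI]
        · by_cases hI : j ∈ I
          · simp [hj, hI, pderiv_X_of_ne (Ne.symm hu), pderiv_X_of_ne hju]
          · simp [hj, hI, pderiv_X_of_ne hju]
    rw [map_mul, Derivation.leibniz, Derivation.leibniz, hp, key]
    simp only [smul_eq_mul, map_add, map_mul]
    ring

theorem aux_eq {R : Type*} [CommRing R] {n : ℕ} (I : Finset (Fin n)) (i : Fin n) (hi : i ∈ I)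
    (σ : MvPolynomial (Fin n) R →ₐ[R] MvPolynomial (Fin n) R)
    (hσ : ∀ j : Fin n, σ (X j) =
      if j = i then X i else if j ∈ I then X i * X j else X j)
    (p : MvPolynomial (Fin n) R) :
    X i * pderiv i (σ p) = ∑ j ∈ I, σ (X j * pderiv j p) := by
  induction p using MvPolynomial.induction_on with
  | C a =>
    have : σ (C a) = C a := σ.commutes a
    simp [this]
  | add p q hp hq => simp only [map_add, mul_add, Finset.sum_add_distrib, hp, hq]
  | mul_X p l hp =>
    have key : X i * pderiv i (σ (X l)) = ∑ j ∈ I, σ (X j * pderiv j (X l)) := by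
      have : ∀ j ∈ I, σ (X j * pderiv j (X l)) = if j = l then σ (X l) else 0 := by
        intro j _
        by_cases h : j = l
        · subst h; simp
        · simp [h, pderiv_X_of_ne (Ne.symm h)]
      rw [Finset.sum_congr rfl this, Finset.sum_ite_eq', hσ]
      by_cases hl : l = i
      · subst hl; simp [hi]
      · by_cases hI : l ∈ I
        · simp [hl, hI, pderiv_X_of_ne hl]
        · simp [hl, hI, pderiv_X_of_ne hl]
    rw [map_mul, Derivation.leibniz, smul_eq_mul, smul_eq_mul]
    calc _ = σ p * (X i * pderiv i (σ (X l))) + σ (X l) * (X i * pderiv i (σ p)) := by ring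
      _ = _ := by
        rw [key, hp, Finset.mul_sum, Finset.mul_sum, ← Finset.sum_add_distrib]
        refine Finset.sum_congr rfl fun j _ => ?_
        rw [Derivation.leibniz, smul_eq_mul, smul_eq_mul]
        simp only [map_mul, map_add]
        ring

theorem aux_cancel {R : Type*} [CommRing R] {n : ℕ} (i : Fin n) (k : ℕ)
    {a b : MvPolynomial (Fin n) R} (h : X i ^ k * a = X i ^ k * b) : a = b := by
  have h1 : IsLeftRegular (X i ^ k : MvPolynomial (Fin n) R) := by
    rw [X_pow_eq_monomial]
    intro a b hab
    ext m
    have := congrArg (coeff (Finsupp.single i k + m)) hab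
    simpa [coeff_monomial_mul] using this
  exact h1 h

/-- **Lemma 5.8, chart version for a transformation of type (i)
(Bierstone–Milman, "Desingularization algorithms I").**
For the admissible blow-up chart substitution `σ = σ_{I,i}` and `f` of
order `≥ d` along the centre `{X_j = 0 : j ∈ I}`, with strict transform
`g` (`σ(f) = X_i^d · g`): every `h ∈ ∆_E(f)` satisfies
`X_i^{d-1} ∣ σ(h)`, and any quotient `q` with `σ(h) = X_i^{d-1} · q`
lies in the ideal generated by `∆_{E ∪ {i}}(g)`. -/
theorem stmt_4 {R : Type*} [CommRing R] {n : ℕ} (hn : 1 ≤ n)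
    (E I : Finset (Fin n)) (i : Fin n) (hi : i ∈ I) (d : ℕ) (hd : 1 ≤ d)
    (σ : MvPolynomial (Fin n) R →ₐ[R] MvPolynomial (Fin n) R)
    (hσ : ∀ j : Fin n, σ (X j) =
      if j = i then X i else if j ∈ I then X i * X j else X j)
    (f : MvPolynomial (Fin n) R)
    (hf : f ∈ (Ideal.span (X '' (I : Set (Fin n)) :
      Set (MvPolynomial (Fin n) R))) ^ d)
    (g : MvPolynomial (Fin n) R) (hg : σ f = X i ^ d * g) :
    ∀ h ∈ deltaSet E f,
      X i ^ (d - 1) ∣ σ h ∧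
      ∀ q : MvPolynomial (Fin n) R, σ h = X i ^ (d - 1) * q →
        q ∈ Ideal.span (deltaSet (insert i E) g) := by
  obtain ⟨k, rfl⟩ : ∃ k, d = k + 1 := ⟨d - 1, by omega⟩
  set J := Ideal.span (deltaSet (insert i E) g) with hJ
  have hgJ : g ∈ J := Ideal.subset_span (Or.inl (Or.inl rfl))
  have hJu : ∀ u, u ∉ insert i E → pderiv u g ∈ J := fun u hu =>
    Ideal.subset_span (Or.inr ⟨u, hu, rfl⟩)
  have hJX : ∀ j, X j * pderiv j g ∈ J := by
    intro j
    by_cases hj : j ∈ insert i E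
    · exact Ideal.subset_span (Or.inl (Or.inr ⟨j, hj, rfl⟩))
    · exact J.mul_mem_left _ (hJu j hj)
  have hne : ∀ u, u ≠ i →
      (if u ∈ I then X i else 1) * σ (pderiv u f) = X i ^ (k + 1) * pderiv u g := by
    intro u hu
    rw [← aux_ne I i σ hσ u hu, hg, Derivation.leibniz, Derivation.leibniz_pow,
      pderiv_X_of_ne (Ne.symm hu)]
    simp
  have hneX : ∀ u, u ≠ i → σ (X u * pderiv u f) = X i ^ (k + 1) * (X u * pderiv u g) := by
    intro u hu
    have h1 := hne u hu
    rw [map_mul, hσ, if_neg hu]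
    by_cases hI : u ∈ I
    · simp only [hI, if_true] at h1 ⊢
      linear_combination X u * h1
    · simp only [hI, if_false] at h1 ⊢
      linear_combination X u * h1
  have hii : ∃ r ∈ J, σ (X i * pderiv i f) = X i ^ (k + 1) * r := by
    refine ⟨((k + 1 : ℕ) : MvPolynomial (Fin n) R) * g + X i * pderiv i g
      - ∑ j ∈ I.erase i, X j * pderiv j g, ?_, ?_⟩
    · exact J.sub_mem (J.add_mem (J.mul_mem_left _ hgJ) (hJX i))
        (J.sum_mem fun j _ => hJX j)
    · have h1 := aux_eq I i hi σ hσ f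
      rw [← Finset.add_sum_erase I _ hi, Finset.sum_congr rfl
        (fun j hj => hneX j (Finset.ne_of_mem_erase hj)), ← Finset.mul_sum, hg,
        Derivation.leibniz, Derivation.leibniz_pow, pderiv_X_self] at h1
      simp only [smul_eq_mul, nsmul_eq_mul, Nat.add_sub_cancel, mul_one] at h1
      linear_combination -h1
  intro h hh
  suffices H : ∃ r ∈ J, σ h = X i ^ k * r by
    obtain ⟨r, hr, hrr⟩ := H
    refine ⟨⟨r, hrr⟩, fun q hq => ?_⟩
    have : q = r := aux_cancel i k (hq.symm.trans hrr)
    exact this ▸ hr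
  rcases hh with (rfl | ⟨e, he, rfl⟩) | ⟨u, hu, rfl⟩
  · exact ⟨X i * g, J.mul_mem_left _ hgJ, by rw [hg]; ring⟩
  · by_cases hei : e = i
    · subst hei
      obtain ⟨r, hr, h1⟩ := hii
      exact ⟨X e * r, J.mul_mem_left _ hr, by rw [h1]; ring⟩
    · exact ⟨X i * (X e * pderiv e g), J.mul_mem_left _ (hJX e), by rw [hneX e hei]; ring⟩
  · by_cases hui : u = i
    · subst hui
      obtain ⟨r, hr, h1⟩ := hii
      refine ⟨r, hr, aux_cancel u 1 ?_⟩
      rw [map_mul, hσ, if_pos rfl] at h1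
      linear_combination h1
    · have hu' : pderiv u g ∈ J := hJu u (by simp [hui, hu])
      have h1 := hne u hui
      by_cases hI : u ∈ I
      · simp only [hI, if_true] at h1
        refine ⟨_, hu', aux_cancel i 1 ?_⟩
        linear_combination h1
      · simp only [hI, if_false] at h1
        refine ⟨X i * pderiv u g, J.mul_mem_left _ hu', ?_⟩
        linear_combination h1
end

section
/- Let K be a field, n ≥ 1, I ⊆ {1,…,n}, i ∈ I, and let σ = σ_{I,i} be the blow-up chart substitution on K[X_1,…,X_n]. For a nonzero polynomial h, let μ_e(h) denote the largest m ∈ ℕ with X_e^m dividing h, and let μ_I(h) denote the largest m ∈ ℕ such that h belongs to the m-th power of the ideal generated by {X_j : j ∈ I}. Then for every nonzero h ∈ K[X_1,…,X_n]: σ(h) ≠ 0; μ_i(σ(h)) = μ_I(h); and μ_e(σ(h)) = μ_e(h) for every e ≠ i. Consequently, if μ ≤ μ_I(h) and h' := σ(h)/X_i^{μ}, then μ_i(h') = μ_I(h) − μ and μ_e(h') = μ_e(h) for all e ≠ i. -/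
open MvPolynomial

theorem aux_dvd {K : Type*} [Field K] {n : ℕ} (e : Fin n) (m : ℕ)
    (p : MvPolynomial (Fin n) K) :
    X e ^ m ∣ p ↔ ∀ a, coeff a p ≠ 0 → m ≤ a e := by
  rw [X_pow_eq_monomial]
  constructor
  · rintro ⟨q, rfl⟩ a ha
    rw [coeff_monomial_mul'] at ha
    split_ifs at ha with h
    · simpa using h e
    · exact absurd rfl ha
  · intro H
    rw [p.as_sum]
    refine Finset.dvd_sum fun a ha => ?_
    have h1 : Finsupp.single e m ≤ a := by
      rw [Finsupp.single_le_iff]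
      exact H a (mem_support_iff.mp ha)
    refine ⟨monomial (a - Finsupp.single e m) (coeff a p), ?_⟩
    rw [monomial_mul, one_mul, add_tsub_cancel_of_le h1]

/-- exponent map -/
noncomputable def auxPhi {n : ℕ} (I : Finset (Fin n)) (i : Fin n) (a : Fin n →₀ ℕ) : Fin n →₀ ℕ :=
  Finsupp.single i (∑ j ∈ I.erase i, a j) + a

theorem auxPhi_ne {n : ℕ} (I : Finset (Fin n)) (i e : Fin n) (he : e ≠ i) (a : Fin n →₀ ℕ) :
    auxPhi I i a e = a e := by
  simp [auxPhi, Finsupp.single_apply, he.symm]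

theorem auxPhi_self {n : ℕ} (I : Finset (Fin n)) (i : Fin n) (hi : i ∈ I) (a : Fin n →₀ ℕ) :
    auxPhi I i a i = ∑ j ∈ I, a j := by
  simp [auxPhi, Finset.sum_erase_add I _ hi]

theorem auxPhi_inj {n : ℕ} (I : Finset (Fin n)) (i : Fin n) :
    Function.Injective (auxPhi I i) := by
  intro a b hab
  have h1 : ∀ e, e ≠ i → a e = b e := fun e he => by
    rw [← auxPhi_ne I i e he a, hab, auxPhi_ne I i e he b]
  have h2 : ∑ j ∈ I.erase i, a j = ∑ j ∈ I.erase i, b j :=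
    Finset.sum_congr rfl fun j hj => h1 j (Finset.ne_of_mem_erase hj)
  unfold auxPhi at hab
  rw [h2] at hab
  exact add_left_cancel hab

theorem aux_monomial {K : Type*} [Field K] {n : ℕ}
    (I : Finset (Fin n)) (i : Fin n)
    (σ : MvPolynomial (Fin n) K →ₐ[K] MvPolynomial (Fin n) K)
    (hσ : ∀ j : Fin n, σ (X j) =
      if j = i then X i else if j ∈ I then X i * X j else X j)
    (a : Fin n →₀ ℕ) (c : K) : σ (monomial a c) = monomial (auxPhi I i a) c := by
  have h1 : ∀ j, σ (X j) = (if j ∈ I.erase i then X i else 1) * X j := by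
    intro j
    rw [hσ]
    by_cases hj : j = i
    · simp [hj]
    · by_cases hI : j ∈ I <;> simp [hj, hI]
  have h2 : (monomial (auxPhi I i a) c : MvPolynomial (Fin n) K) =
      X i ^ (∑ j ∈ I.erase i, a j) * monomial a c := by
    rw [X_pow_eq_monomial, monomial_mul, one_mul]; rfl
  rw [h2, monomial_eq, Finsupp.prod_fintype _ _ (by simp), map_mul, map_prod]
  have h3 : σ (C c) = C c := by
    rw [← algebraMap_eq]; exact σ.commutes c
  simp only [map_pow, h1, mul_pow, Finset.prod_mul_distrib, h3, ite_pow, one_pow]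
  rw [Finset.prod_ite_mem, Finset.univ_inter, Finset.prod_pow_eq_pow_sum]
  ring

theorem aux_coeff {K : Type*} [Field K] {n : ℕ}
    (I : Finset (Fin n)) (i : Fin n)
    (σ : MvPolynomial (Fin n) K →ₐ[K] MvPolynomial (Fin n) K)
    (hσ : ∀ j : Fin n, σ (X j) =
      if j = i then X i else if j ∈ I then X i * X j else X j)
    (h : MvPolynomial (Fin n) K) (P : (Fin n →₀ ℕ) → Prop) :
    (∀ b, coeff b (σ h) ≠ 0 → P b) ↔ ∀ a, coeff a h ≠ 0 → P (auxPhi I i a) := by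
  have key : σ h = ∑ a ∈ h.support, monomial (auxPhi I i a) (coeff a h) := by
    conv_lhs => rw [h.as_sum, map_sum]
    exact Finset.sum_congr rfl fun a _ => aux_monomial I i σ hσ a _
  constructor
  · intro H a ha
    apply H
    rw [key, coeff_sum]
    simp only [coeff_monomial, (auxPhi_inj I i).eq_iff]
    simpa using ha
  · intro H b hb
    rw [key, coeff_sum] at hb
    obtain ⟨a, ha, hab⟩ := Finset.exists_ne_zero_of_sum_ne_zero hb
    rw [coeff_monomial] at hab
    split_ifs at hab with h1
    · exact h1 ▸ H a hab
    · exact absurd rfl hab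

theorem aux_ideal {K : Type*} [Field K] {n : ℕ}
    (I : Finset (Fin n)) (i : Fin n) (hi : i ∈ I)
    (σ : MvPolynomial (Fin n) K →ₐ[K] MvPolynomial (Fin n) K)
    (hσ : ∀ j : Fin n, σ (X j) =
      if j = i then X i else if j ∈ I then X i * X j else X j)
    (h : MvPolynomial (Fin n) K) (m : ℕ) :
    h ∈ (Ideal.span (X '' (I : Set (Fin n)) :
        Set (MvPolynomial (Fin n) K))) ^ m ↔ X i ^ m ∣ σ h := by
  constructor
  · intro hm
    have h1 := Ideal.mem_map_of_mem σ hm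
    rw [Ideal.map_pow] at h1
    have h2 : Ideal.map σ (Ideal.span (X '' (I : Set (Fin n)) :
        Set (MvPolynomial (Fin n) K))) ≤ Ideal.span {X i} := by
      rw [Ideal.map_span, Ideal.span_le]
      rintro _ ⟨_, ⟨j, hj, rfl⟩, rfl⟩
      rw [SetLike.mem_coe, Ideal.mem_span_singleton, hσ]
      have hj' : j ∈ I := hj
      by_cases hji : j = i <;> simp [hji, hj']
    have h3 := Ideal.pow_right_mono h2 m h1
    rwa [Ideal.span_singleton_pow, Ideal.mem_span_singleton] at h3
  · intro hd
    rw [aux_dvd, aux_coeff I i σ hσ h (fun b => m ≤ b i)] at hd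
    rw [h.as_sum]
    refine Ideal.sum_mem _ fun a ha => ?_
    have h1 := hd a (mem_support_iff.mp ha)
    rw [auxPhi_self I i hi] at h1
    refine Ideal.pow_le_pow_right h1 ?_
    rw [monomial_eq, Finsupp.prod_fintype _ _ (by simp)]
    refine Ideal.mul_mem_left _ _ ?_
    rw [← Finset.prod_mul_prod_compl I]
    refine Ideal.mul_mem_right _ _ ?_
    rw [← Finset.prod_pow_eq_pow_sum]
    refine Ideal.prod_mem_prod fun j hj => Ideal.pow_mem_pow (Ideal.subset_span (Set.mem_image_of_mem X (Finset.mem_coe.2 hj))) _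

/-- **Computational core of Lemma 3.7 (Bierstone–Milman,
"Desingularization algorithms I").**
For the blow-up chart substitution `σ = σ_{I,i}` and a nonzero polynomial
`h`, let `μ_I(h)` be the largest `m` with `h` in the `m`-th power of the
ideal `(X_j : j ∈ I)` (the order of `h` along the centre), and `μ_e(·)`
the largest `m` with `X_e^m` dividing (the order along `{X_e = 0}`).
Then `σ(h) ≠ 0`, `μ_i(σ(h)) = μ_I(h)`, `μ_e(σ(h)) = μ_e(h)` for `e ≠ i`;
and if `μ ≤ μ_I(h)` and `h' = σ(h)/X_i^μ`, then
`μ_i(h') = μ_I(h) - μ` and `μ_e(h') = μ_e(h)` for all `e ≠ i`.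
("largest" is formalized by `IsGreatest`.) -/
theorem stmt_6 {K : Type*} [Field K] {n : ℕ} (hn : 1 ≤ n)
    (I : Finset (Fin n)) (i : Fin n) (hi : i ∈ I)
    (σ : MvPolynomial (Fin n) K →ₐ[K] MvPolynomial (Fin n) K)
    (hσ : ∀ j : Fin n, σ (X j) =
      if j = i then X i else if j ∈ I then X i * X j else X j)
    (h : MvPolynomial (Fin n) K) (hh : h ≠ 0)
    (μI : ℕ)
    (hμI : IsGreatest {m : ℕ |
      h ∈ (Ideal.span (X '' (I : Set (Fin n)) :
        Set (MvPolynomial (Fin n) K))) ^ m} μI) :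
    σ h ≠ 0 ∧
    IsGreatest {m : ℕ | X i ^ m ∣ σ h} μI ∧
    (∀ e : Fin n, e ≠ i → ∀ μe : ℕ,
      IsGreatest {m : ℕ | X e ^ m ∣ h} μe →
      IsGreatest {m : ℕ | X e ^ m ∣ σ h} μe) ∧
    ∀ μ : ℕ, μ ≤ μI → ∀ h' : MvPolynomial (Fin n) K, σ h = X i ^ μ * h' →
      IsGreatest {m : ℕ | X i ^ m ∣ h'} (μI - μ) ∧
      ∀ e : Fin n, e ≠ i → ∀ μe : ℕ,
        IsGreatest {m : ℕ | X e ^ m ∣ h} μe →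
        IsGreatest {m : ℕ | X e ^ m ∣ h'} μe := by
  have hI := aux_ideal I i hi σ hσ h
  have he : ∀ e, e ≠ i → ∀ m, X e ^ m ∣ σ h ↔ X e ^ m ∣ h := by
    intro e he m
    rw [aux_dvd, aux_dvd, aux_coeff I i σ hσ h (fun b => m ≤ b e)]
    simp only [auxPhi_ne I i e he]
  simp only [hI] at hμI
  refine ⟨?_, hμI, ?_, ?_⟩
  · intro h0
    have := hμI.2 (show μI + 1 ∈ {m : ℕ | X i ^ m ∣ σ h} by simp [h0])
    omega
  · intro e hei μe H
    simpa only [he e hei] using H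
  · intro μ hμ h' hh'
    have hX : ∀ k : Fin n, (X k : MvPolynomial (Fin n) K) ≠ 0 := fun k => X_ne_zero k
    constructor
    · have key : ∀ m, X i ^ m ∣ h' ↔ X i ^ (μ + m) ∣ σ h := by
        intro m
        rw [hh', pow_add, mul_dvd_mul_iff_left (pow_ne_zero _ (hX i))]
      constructor
      · show X i ^ (μI - μ) ∣ h'
        rw [key, Nat.add_sub_cancel' hμ]
        exact hμI.1
      · intro m hm
        have := hμI.2 ((key m).1 hm)
        omega
    · intro e hei μe H
      have key : ∀ m, X e ^ m ∣ h' ↔ X e ^ m ∣ h := by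
        intro m
        rw [← he e hei, hh']
        refine ⟨fun H => H.mul_left _, fun H => ?_⟩
        refine (X_prime (R := K) (i := e)).pow_dvd_of_dvd_mul_left m ?_ H
        intro hd
        have := (X_prime (R := K) (i := e)).dvd_of_dvd_pow hd
        rw [X_dvd_X] at this
        exact hei (by simpa using this)
      simpa only [key] using H
end

section
/- Let K be a field, n ≥ 1, I ⊆ {1,…,n}, i ∈ I, d ≥ 1 an integer, and σ = σ_{I,i} the blow-up chart substitution. Let f ∈ K[X_1,…,X_n] satisfy: f lies in the d-th power of the ideal generated by {X_j : j ∈ I}, and f has a nonzero coefficient at some monomial of total degree d (so ord_0 f = d, and d equals the order of f along the centre C = {X_j = 0 : j ∈ I}). Let g be the polynomial with σ(f) = X_i^d·g. Then for every point c ∈ K^n with c_i = 0 and c_j = 0 for all j ∉ I, one has ord_c g ≤ d. -/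
open MvPolynomial

lemma aux_hc {K : Type*} [Field K] {n : ℕ} (d : ℕ) (j : Fin n) (h : MvPolynomial (Fin n) K) :
    homogeneousComponent (d+1) (X j * h) = X j * homogeneousComponent d h := by
  classical
  ext m
  rw [coeff_homogeneousComponent, coeff_X_mul', coeff_X_mul', coeff_homogeneousComponent]
  by_cases hj : j ∈ m.support
  · simp only [hj, if_true]
    have h1 : Finsupp.single j 1 ≤ m := by
      rw [Finsupp.single_le_iff]
      exact Nat.one_le_iff_ne_zero.mpr (Finsupp.mem_support_iff.mp hj)
    obtain ⟨m', rfl⟩ := exists_add_of_le h1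
    have : (Finsupp.single j 1 + m').degree = m'.degree + 1 := by
      rw [map_add, Finsupp.degree_single, add_comm]
    rw [this, add_tsub_cancel_left]
    simp
  · simp [hj]

lemma aux_key {K : Type*} [Field K] {n : ℕ}
    (I : Finset (Fin n)) (i : Fin n)
    (σ φ θ T : MvPolynomial (Fin n) K →ₐ[K] MvPolynomial (Fin n) K)
    (h0 : ∀ j, φ (σ (X j)) = 0)
    (h1 : ∀ j ∈ I, ∃ q, σ (X j) = X i * q ∧ φ q = θ (X j))
    (h2 : ∀ j ∈ I, T (σ (X j)) = X i * θ (X j))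
    (h3 : ∀ j ∈ I, (θ (X j)).totalDegree ≤ 1) (d : ℕ) :
    ∀ f ∈ (Ideal.span (X '' (I : Set (Fin n)) :
      Set (MvPolynomial (Fin n) K))) ^ d, ∃ g, σ f = X i ^ d * g ∧
      φ g = θ (homogeneousComponent d f) ∧
      T (σ (homogeneousComponent d f)) = X i ^ d * θ (homogeneousComponent d f) ∧
      (θ (homogeneousComponent d f)).totalDegree ≤ d := by
  induction d with
  | zero =>
    intro f _
    refine ⟨σ f, by simp, ?_, ?_, ?_⟩
    · rw [homogeneousComponent_zero, ← algebraMap_eq, AlgHom.commutes]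
      have : φ.comp σ = (Algebra.ofId K _).comp (aeval (fun _ : Fin n => (0:K))) := by
        ext1 j
        simp [h0]
      have := congrArg (fun F => F f) this
      simpa [Algebra.ofId_apply, ← constantCoeff_eq, aeval_zero'] using this
    · simp only [homogeneousComponent_zero, ← algebraMap_eq, AlgHom.commutes]; simp
    · simp only [homogeneousComponent_zero, ← algebraMap_eq, AlgHom.commutes]; simp [algebraMap_eq]
  | succ d ih =>
    intro f hf
    have hadd : ∀ x y : MvPolynomial (Fin n) K,
      (∃ g, σ x = X i ^ (d+1) * g ∧
      φ g = θ (homogeneousComponent (d+1) x) ∧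
      T (σ (homogeneousComponent (d+1) x)) = X i ^ (d+1) * θ (homogeneousComponent (d+1) x) ∧
      (θ (homogeneousComponent (d+1) x)).totalDegree ≤ d+1) →
      (∃ g, σ y = X i ^ (d+1) * g ∧
      φ g = θ (homogeneousComponent (d+1) y) ∧
      T (σ (homogeneousComponent (d+1) y)) = X i ^ (d+1) * θ (homogeneousComponent (d+1) y) ∧
      (θ (homogeneousComponent (d+1) y)).totalDegree ≤ d+1) →
      (∃ g, σ (x+y) = X i ^ (d+1) * g ∧
      φ g = θ (homogeneousComponent (d+1) (x+y)) ∧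
      T (σ (homogeneousComponent (d+1) (x+y))) =
        X i ^ (d+1) * θ (homogeneousComponent (d+1) (x+y)) ∧
      (θ (homogeneousComponent (d+1) (x+y))).totalDegree ≤ d+1) := by
      rintro x y ⟨g, a1, a2, a3, a4⟩ ⟨g', b1, b2, b3, b4⟩
      refine ⟨g + g', ?_, ?_, ?_, ?_⟩
      · rw [map_add, a1, b1, mul_add]
      · rw [map_add, a2, b2, map_add, map_add]
      · simp only [map_add]
        rw [a3, b3, mul_add]
      · simp only [map_add]
        exact (totalDegree_add _ _).trans (max_le a4 b4)
    rw [pow_succ'] at hf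
    induction hf using Submodule.mul_induction_on' with
    | add x hx y hy h h' => exact hadd _ _ h h'
    | mem_mul_mem r hr h hh =>
      induction hr using Submodule.span_induction generalizing h with
      | zero => exact ⟨0, by simp⟩
      | add x y _ _ hx hy =>
        rw [add_mul]
        exact hadd _ _ (hx h hh) (hy h hh)
      | smul a x _ hx =>
        rw [smul_eq_mul, mul_comm a, mul_assoc]
        exact hx _ (Ideal.mul_mem_left _ _ hh)
      | mem x hx =>
        obtain ⟨j, hj, rfl⟩ := hx
        have hj : j ∈ I := hj
        obtain ⟨g, a1, a2, a3, a4⟩ := ih h hh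
        obtain ⟨q, q1, q2⟩ := h1 j hj
        simp only [aux_hc]
        refine ⟨q * g, ?_, ?_, ?_, ?_⟩
        · rw [map_mul, a1, q1]; ring
        · rw [map_mul, a2, q2, map_mul]
        · rw [map_mul, map_mul, map_mul, a3, h2 j hj]; ring
        · rw [map_mul]
          have := h3 j hj
          exact (totalDegree_mul _ _).trans (by omega)

lemma aux_inj {K : Type*} [Field K] {n : ℕ}
    (I : Finset (Fin n)) (i : Fin n)
    (σ : MvPolynomial (Fin n) K →ₐ[K] MvPolynomial (Fin n) K)
    (hσ : ∀ j : Fin n, σ (X j) =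
      if j = i then X i else if j ∈ I then X i * X j else X j) : Function.Injective σ := by
  let F := FractionRing (MvPolynomial (Fin n) K)
  let x : Fin n → F := fun j => algebraMap (MvPolynomial (Fin n) K) F (X j)
  have hx : x i ≠ 0 := by
    simp only [x]
    rw [Ne, IsFractionRing.to_map_eq_zero_iff]
    exact X_ne_zero i
  let κ : MvPolynomial (Fin n) K →ₐ[K] F :=
    aeval (fun j => if j = i then x i else if j ∈ I then x j / x i else x j)
  have hκ : κ.comp σ = IsScalarTower.toAlgHom K (MvPolynomial (Fin n) K) F := by
    ext1 j
    simp only [AlgHom.comp_apply, hσ, κ]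
    split_ifs with h1 h2
    · subst h1; simp [x]
    · simp only [map_mul, aeval_X, h1, h2, if_true, if_false]
      exact mul_div_cancel₀ (x j) hx
    · simp [h1, h2, x]
  have : Function.Injective (κ.comp σ) := by
    rw [hκ]
    exact IsFractionRing.injective (MvPolynomial (Fin n) K) F
  exact Function.Injective.of_comp (f := κ) this

/-- **Infinitesimal upper-semicontinuity of the order under an admissible
blowing-up (Examples 1.13(1) of Bierstone–Milman, "Desingularization
algorithms I"): `μ_{a'}(f') ≤ μ_a(f)`.**
Suppose `f` lies in the `d`-th power of the ideal `(X_j : j ∈ I)` and has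
a nonzero coefficient in some monomial of total degree `d` (so
`ord_0 f = d = μ_C(f)`).  Let `g` be the strict transform,
`σ(f) = X_i^d · g`, where `σ = σ_{I,i}` is the blow-up chart substitution.
Then at every point `c` of the exceptional hypersurface `{X_i = 0}` lying
over the origin (`c_i = 0` and `c_j = 0` for `j ∉ I`), `ord_c g ≤ d`,
i.e. not `ord_c g ≥ d + 1`. -/
theorem stmt_7 {K : Type*} [Field K] {n : ℕ} (hn : 1 ≤ n)
    (I : Finset (Fin n)) (i : Fin n) (hi : i ∈ I) (d : ℕ) (hd : 1 ≤ d)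
    (σ : MvPolynomial (Fin n) K →ₐ[K] MvPolynomial (Fin n) K)
    (hσ : ∀ j : Fin n, σ (X j) =
      if j = i then X i else if j ∈ I then X i * X j else X j)
    (f : MvPolynomial (Fin n) K)
    (hf : f ∈ (Ideal.span (X '' (I : Set (Fin n)) :
      Set (MvPolynomial (Fin n) K))) ^ d)
    (hf' : ∃ e : Fin n →₀ ℕ, (∑ j, e j) = d ∧ MvPolynomial.coeff e f ≠ 0)
    (g : MvPolynomial (Fin n) K) (hg : σ f = X i ^ d * g) :
    ∀ c : Fin n → K, c i = 0 → (∀ j : Fin n, j ∉ I → c j = 0) →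
      ¬ ordGe c g (d + 1) := by
  classical
  intro c hci hc hord
  let φ : MvPolynomial (Fin n) K →ₐ[K] MvPolynomial (Fin n) K :=
    aeval (fun j => if j = i then 0 else if j ∈ I then X j + C (c j) else 0)
  let θ : MvPolynomial (Fin n) K →ₐ[K] MvPolynomial (Fin n) K :=
    aeval (fun j => if j = i then 1 else if j ∈ I then X j + C (c j) else 0)
  let T : MvPolynomial (Fin n) K →ₐ[K] MvPolynomial (Fin n) K :=
    aeval (fun j => X j + C (c j))
  let S : MvPolynomial (Fin n) K →ₐ[K] MvPolynomial (Fin n) K :=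
    aeval (fun j => X j - C (c j))
  have hT : Function.Injective T := by
    have : S.comp T = AlgHom.id K _ := by
      ext1 j
      simp [S, T, ← algebraMap_eq]
    refine Function.LeftInverse.injective (g := S) fun p => ?_
    exact congrArg (fun F => F p) this
  obtain ⟨g', a1, a2, a3, a4⟩ := aux_key I i σ φ θ T
    (by
      intro j
      rw [hσ]
      split_ifs with h1 h2 <;> simp [φ, *])
    (by
      intro j hj
      by_cases h1 : j = i
      · subst h1; exact ⟨1, by simp [hσ], by simp [θ]⟩
      · exact ⟨X j, by simp [hσ, h1, hj], by simp [φ, θ, h1, hj]⟩)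
    (by
      intro j hj
      rw [hσ]
      split_ifs with h1 
      · simp [T, θ, hci, h1]
      · simp [T, θ, hci, h1, hj])
    (by
      intro j hj
      by_cases h1 : j = i
      · simp [θ, h1]
      · simp only [θ, aeval_X, h1, hj, if_true, if_false]
        refine (totalDegree_add _ _).trans ?_
        simp) d f hf
  have hgg : g = g' := mul_left_cancel₀ (pow_ne_zero d (X_ne_zero i)) (hg.symm.trans a1)
  subst hgg
  have hmem : φ g ∈ idealOfVars (Fin n) K ^ (d+1) := by
    have h1 := Ideal.mem_map_of_mem φ hord
    rw [Ideal.map_pow] at h1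
    refine Ideal.pow_right_mono ?_ _ h1
    rw [Ideal.map_span, Ideal.span_le]
    rintro _ ⟨_, ⟨j, rfl⟩, rfl⟩
    simp only [SetLike.mem_coe, φ, map_sub, aeval_X]
    rw [← algebraMap_eq, AlgHom.commutes, algebraMap_eq]
    split_ifs with h1 h2
    · simp [h1, hci]
    · rw [add_sub_cancel_right]
      exact Ideal.subset_span ⟨j, rfl⟩
    · simp [hc j h2]
  have hz : φ g = 0 := by
    ext m
    rw [coeff_zero]
    by_cases hm : m.degree < d + 1
    · exact (mem_pow_idealOfVars_iff' _ _).mp hmem m hm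
    · apply coeff_eq_zero_of_totalDegree_lt
      rw [a2]
      have : m.degree = ∑ i ∈ m.support, m i := rfl
      omega
  rw [← a2, hz, mul_zero] at a3
  have h4 : homogeneousComponent d f = 0 :=
    aux_inj I i σ hσ (hT (by rw [a3]; simp))
  obtain ⟨e, he, hne⟩ := hf'
  apply hne
  have h5 := coeff_homogeneousComponent d f e
  rw [h4, coeff_zero, if_pos (by rw [Finsupp.degree_eq_sum, he])] at h5
  exact h5.symm
end

section
/- Let K be an infinite field, f ∈ K[X_1,…,X_n] a nonzero polynomial, I ⊆ {1,…,n}, and let μ be the largest natural number m such that f belongs to the m-th power of the ideal generated by {X_j : j ∈ I}. Let C = {c ∈ K^n : c_j = 0 for all j ∈ I}. Then: (i) ord_c f ≥ μ for every c ∈ C; (ii) there is a nonzero polynomial h in the variables X_u, u ∉ I, such that ord_c f = μ for every c ∈ C with h(c) ≠ 0; in particular, there exists c ∈ C with ord_c f = μ. -/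
open MvPolynomial

/-- All monomials of `g` have `I`-degree at least `m`. -/
def vGe9 {K : Type*} [CommRing K] {n : ℕ} (I : Finset (Fin n)) (m : ℕ)
    (g : MvPolynomial (Fin n) K) : Prop :=
  ∀ d : Fin n →₀ ℕ, ∑ j ∈ I, d j < m → coeff d g = 0

lemma vGe9_mul {K : Type*} [CommRing K] {n : ℕ} (I : Finset (Fin n)) (a b : ℕ)
    (g g' : MvPolynomial (Fin n) K) (hg : vGe9 I a g) (hg' : vGe9 I b g') :
    vGe9 I (a + b) (g * g') := by
  intro d hd
  rw [coeff_mul]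
  refine Finset.sum_eq_zero fun e he => ?_
  rw [Finset.HasAntidiagonal.mem_antidiagonal] at he
  rw [← he] at hd
  simp only [Finsupp.add_apply, Finset.sum_add_distrib] at hd
  by_cases h1 : ∑ j ∈ I, e.1 j < a
  · rw [hg _ h1, zero_mul]
  · rw [hg' _ (by omega), mul_zero]

lemma vGe9_of_mem {K : Type*} [Field K] {n : ℕ} (I : Finset (Fin n)) (m : ℕ) :
    ∀ g : MvPolynomial (Fin n) K,
    g ∈ (Ideal.span (X '' (I : Set (Fin n)) : Set (MvPolynomial (Fin n) K))) ^ m →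
      vGe9 I m g := by
  induction m with
  | zero => intro g _ d hd; omega
  | succ m ih =>
    intro g hg
    rw [pow_succ] at hg
    refine Submodule.mul_induction_on hg ?_ ?_
    · intro p hp q hq
      refine vGe9_mul I m 1 p q (ih p hp) ?_
      intro d hd
      rw [mem_ideal_span_X_image] at hq
      by_contra hne
      obtain ⟨i, hi, hi2⟩ := hq d (mem_support_iff.mpr hne)
      have h0 : ∑ j ∈ I, d j = 0 := by omega
      rw [Finset.sum_eq_zero_iff] at h0
      exact hi2 (h0 i hi)
    · intro x y hx hy d hd
      rw [coeff_add, hx d hd, hy d hd, add_zero]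

lemma mem_of_vGe9 {K : Type*} [Field K] {n : ℕ} (I : Finset (Fin n)) (m : ℕ)
    (g : MvPolynomial (Fin n) K) (hg : vGe9 I m g) :
    g ∈ (Ideal.span (X '' (I : Set (Fin n)) : Set (MvPolynomial (Fin n) K))) ^ m := by
  rw [g.as_sum]
  refine Ideal.sum_mem _ fun d hd => ?_
  have hm : m ≤ ∑ j ∈ I, d j := by
    by_contra h
    exact (mem_support_iff.mp hd) (hg d (by omega))
  rw [monomial_eq, Finsupp.prod_fintype _ _ (by simp), ← Finset.prod_mul_prod_compl I]
  refine Ideal.mul_mem_left _ _ (Ideal.mul_mem_right _ _ ?_)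
  refine Ideal.pow_le_pow_right hm ?_
  rw [← Finset.prod_pow_eq_pow_sum]
  refine Ideal.prod_mem_prod fun j hj => Ideal.pow_mem_pow (Ideal.subset_span (Set.mem_image_of_mem _ hj)) _

/-- Specialize the variables outside `I` to `c`. -/
noncomputable def sp9 {K : Type*} [Field K] {n : ℕ} (I : Finset (Fin n)) (c : Fin n → K) :
    MvPolynomial (Fin n) K →ₐ[K] MvPolynomial (Fin n) K :=
  aeval (fun i => if i ∈ I then X i else C (c i))

lemma sp9_mem {K : Type*} [Field K] {n : ℕ} (I : Finset (Fin n)) (c : Fin n → K)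
    (hc : ∀ j ∈ I, c j = 0) (m : ℕ) (f : MvPolynomial (Fin n) K) (h : ordGe c f m) :
    sp9 I c f ∈ (Ideal.span (X '' (I : Set (Fin n)) : Set (MvPolynomial (Fin n) K))) ^ m := by
  have h1 := Ideal.mem_map_of_mem (sp9 I c) h
  rw [Ideal.map_pow, Ideal.map_span] at h1
  refine Ideal.pow_right_mono ?_ m h1
  rw [Ideal.span_le]
  rintro _ ⟨_, ⟨j, rfl⟩, rfl⟩
  by_cases hj : j ∈ I
  · simp only [sp9, map_sub, aeval_X, hj, if_true, hc j hj, map_zero, sub_zero]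
    exact Ideal.subset_span ⟨j, hj, rfl⟩
  · simp [sp9, hj, algebraMap_eq]

lemma sp9_monomial {K : Type*} [Field K] {n : ℕ} (I : Finset (Fin n)) (c : Fin n → K)
    (d : Fin n →₀ ℕ) (r : K) :
    sp9 I c (monomial d r) = monomial (d.filter (· ∈ I))
      (eval c (monomial (d.filter (fun i => ¬ i ∈ I)) r)) := by
  rw [sp9, aeval_monomial, eval_monomial, monomial_eq,
    ← Finsupp.prod_filter_mul_prod_filter_not (fun i => i ∈ I) d]
  have h1 : ((d.filter (· ∈ I)).prod fun i k =>
      (if i ∈ I then X i else C (c i) : MvPolynomial (Fin n) K) ^ k) =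
      (d.filter (· ∈ I)).prod fun i k => X i ^ k := by
    refine Finsupp.prod_congr fun i hi => ?_
    rw [Finsupp.support_filter, Finset.mem_filter] at hi
    rw [if_pos hi.2]
  have h2 : ((d.filter (fun i => ¬ i ∈ I)).prod fun i k =>
      (if i ∈ I then X i else C (c i) : MvPolynomial (Fin n) K) ^ k) =
      C ((d.filter (fun i => ¬ i ∈ I)).prod fun i k => c i ^ k) := by
    rw [Finsupp.prod, Finsupp.prod, map_prod]
    refine Finset.prod_congr rfl fun i hi => ?_
    rw [Finsupp.support_filter, Finset.mem_filter] at hi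
    rw [if_neg hi.2, map_pow]
  rw [h1, h2, algebraMap_eq, map_mul]
  ring

/-- Coefficient of `X^a` (`a` an exponent on `I`) as a polynomial in the other variables. -/
noncomputable def h9 {K : Type*} [Field K] {n : ℕ} (I : Finset (Fin n)) (a : Fin n →₀ ℕ)
    (f : MvPolynomial (Fin n) K) : MvPolynomial (Fin n) K :=
  ∑ d ∈ f.support, if d.filter (· ∈ I) = a then
    monomial (d.filter (fun i => ¬ i ∈ I)) (coeff d f) else 0

lemma coeff_sp9 {K : Type*} [Field K] {n : ℕ} (I : Finset (Fin n)) (c : Fin n → K)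
    (a : Fin n →₀ ℕ) (f : MvPolynomial (Fin n) K) :
    coeff a (sp9 I c f) = eval c (h9 I a f) := by
  conv_lhs => rw [f.as_sum]
  rw [map_sum, coeff_sum, h9, map_sum]
  refine Finset.sum_congr rfl fun d _ => ?_
  rw [sp9_monomial, coeff_monomial]
  split_ifs <;> simp

lemma h9_supported {K : Type*} [Field K] {n : ℕ} (I : Finset (Fin n)) (a : Fin n →₀ ℕ)
    (f : MvPolynomial (Fin n) K) : h9 I a f ∈ supported K {u : Fin n | u ∉ I} := by
  refine Subalgebra.sum_mem _ fun d _ => ?_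
  split_ifs
  · rw [monomial_eq]
    refine Subalgebra.mul_mem _ (Subalgebra.algebraMap_mem _ _) ?_
    refine Subalgebra.prod_mem _ fun i hi => Subalgebra.pow_mem _ ?_ _
    rw [Finsupp.support_filter, Finset.mem_filter] at hi
    exact X_mem_supported.mpr hi.2
  · exact Subalgebra.zero_mem _

lemma h9_ne_zero {K : Type*} [Field K] {n : ℕ} (I : Finset (Fin n)) (d : Fin n →₀ ℕ)
    (f : MvPolynomial (Fin n) K) (hd : coeff d f ≠ 0) : h9 I (d.filter (· ∈ I)) f ≠ 0 := by
  intro h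
  apply hd
  have h1 := congrArg (coeff (d.filter (fun i => ¬ i ∈ I))) h
  rw [h9, coeff_sum, Finset.sum_eq_single d] at h1
  · simpa using h1
  · intro e _ hne
    split_ifs with he
    · rw [coeff_monomial, if_neg]
      intro he2
      apply hne
      rw [← Finsupp.filter_add_filter_not e (fun i => i ∈ I), he, he2,
        Finsupp.filter_add_filter_not]
    · simp
  · intro h2
    rw [notMem_support_iff] at h2
    exact absurd h2 hd

/-- **The order along a coordinate subspace is the generic value of the
order at its points (Definitions 1.4 of Bierstone–Milman,
"Desingularization algorithms I").**
Let `μ = μ_C(f)` be the largest `m` with `f` in the `m`-th power of the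
ideal `(X_j : j ∈ I)`, and `C = {c : c_j = 0 for j ∈ I}`.  Then
(i) `ord_c f ≥ μ` for every `c ∈ C`; (ii) there is a nonzero polynomial
`h` in the complementary variables `X_u`, `u ∉ I`, with `ord_c f = μ`
at every `c ∈ C` with `h(c) ≠ 0`; in particular some `c ∈ C` has
`ord_c f = μ`. -/
theorem stmt_9 {K : Type*} [Field K] [Infinite K] {n : ℕ}
    (f : MvPolynomial (Fin n) K) (hf : f ≠ 0) (I : Finset (Fin n))
    (μ : ℕ)
    (hμ : IsGreatest {m : ℕ |
      f ∈ (Ideal.span (X '' (I : Set (Fin n)) :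
        Set (MvPolynomial (Fin n) K))) ^ m} μ) :
    (∀ c : Fin n → K, (∀ j ∈ I, c j = 0) → ordGe c f μ) ∧
    (∃ h : MvPolynomial (Fin n) K, h ≠ 0 ∧
      h ∈ MvPolynomial.supported K {u : Fin n | u ∉ I} ∧
      ∀ c : Fin n → K, (∀ j ∈ I, c j = 0) → eval c h ≠ 0 →
        ordGe c f μ ∧ ¬ ordGe c f (μ + 1)) ∧
    ∃ c : Fin n → K, (∀ j ∈ I, c j = 0) ∧ ordGe c f μ ∧ ¬ ordGe c f (μ + 1) := by
  have hi : ∀ c : Fin n → K, (∀ j ∈ I, c j = 0) → ordGe c f μ := by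
    intro c hc
    refine Ideal.pow_right_mono ?_ μ hμ.1
    rw [Ideal.span_le]
    rintro _ ⟨j, hj, rfl⟩
    exact Ideal.subset_span ⟨j, by simp [hc j hj]⟩
  obtain ⟨d, hd, hdf⟩ : ∃ d : Fin n →₀ ℕ, ∑ j ∈ I, d j < μ + 1 ∧ coeff d f ≠ 0 := by
    by_contra! hcon
    have : μ + 1 ≤ μ := hμ.2 (mem_of_vGe9 I (μ + 1) f hcon)
    omega
  have hne := h9_ne_zero I d f hdf
  have hsup := h9_supported I (d.filter (· ∈ I)) f
  have hgen : ∀ c : Fin n → K, (∀ j ∈ I, c j = 0) →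
      eval c (h9 I (d.filter (· ∈ I)) f) ≠ 0 → ordGe c f μ ∧ ¬ ordGe c f (μ + 1) := by
    intro c hc hev
    refine ⟨hi c hc, fun hord => hev ?_⟩
    rw [← coeff_sp9]
    refine vGe9_of_mem I (μ + 1) _ (sp9_mem I c hc _ f hord) _ ?_
    rwa [Finset.sum_congr rfl fun j hj => Finsupp.filter_apply_pos (· ∈ I) d hj]
  refine ⟨hi, ⟨_, hne, hsup, hgen⟩, ?_⟩
  obtain ⟨c, hc⟩ : ∃ c : Fin n → K, eval c (h9 I (d.filter (· ∈ I)) f) ≠ 0 := by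
    by_contra! hcon
    exact hne (MvPolynomial.funext fun c => by rw [hcon c, map_zero])
  have hc0 : ∀ j ∈ I, (fun i => if i ∈ I then (0 : K) else c i) j = 0 := by
    intro j hj
    simp [hj]
  refine ⟨_, hc0, hgen _ hc0 ?_⟩
  convert hc using 1
  refine eval₂Hom_congr' rfl ?_ rfl
  intro i hi1 _
  have := (mem_supported.mp hsup) hi1
  simp only [Set.mem_ofPred_eq] at this
  simp [this]
end
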